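/- arXiv:1305.4875 — 5 statements merged into one kernel-verified Lean document; each statement's English description precedes it below -/
import Mathlib

section
/- Let Z be a finite set, T a fixed-point-free involution of Z, and τ a permutation of Z such that T ∘ τ is a fixed-point-free involution. Then (i) for all x, y ∈ Z, x and y lie in the same cycle of τ if and only if T(x) and T(y) lie in the same cycle of τ; and (ii) for every x ∈ Z, x and T(x) never lie in the same cycle of τ. Consequently the cycles of τ come in distinct mirror pairs: T maps each cycle of τ onto a different cycle of τ of the same length. -/
/-!
Since `T` and `T * τ` are involutions, `T` conjugates `τ` to `τ⁻¹`, i.e. `T τ^k = τ^(-k) T`.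
A permutation and its inverse have the same cycles, so `T` permutes the cycles of `τ`.
If `T x = τ^k x`, go halfway from `x` to `T x` along the cycle, to `y = τ^m x`: for `k = 2m` the
point `y` is fixed by `T`, and for `k = 2m + 1` it is fixed by `T * τ`; both are excluded.
-/

/-- Let `Z` be a finite set, `T` a fixed-point-free involution of `Z`, and
`τ` a permutation of `Z` such that `T ∘ τ` is a fixed-point-free involution.  Then
(i) `x` and `y` lie in the same cycle of `τ` iff `T x` and `T y` lie in the same cycle
of `τ`, and (ii) `x` and `T x` never lie in the same cycle of `τ`.  Consequently the
cycles of `τ` come in distinct mirror pairs. -/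
theorem target_perm_mirror_cycles {Z : Type*} [Fintype Z]
    (T τ : Equiv.Perm Z) (hTinv : T * T = 1) (hTfp : ∀ z : Z, T z ≠ z)
    (hinv : (T * τ) * (T * τ) = 1) (hfp : ∀ z : Z, (T * τ) z ≠ z) :
    (∀ x y : Z, τ.SameCycle x y ↔ τ.SameCycle (T x) (T y)) ∧
    (∀ x : Z, ¬ τ.SameCycle x (T x)) := by
  have hT : T⁻¹ = T := inv_eq_of_mul_eq_one_left hTinv
  have hconj : T * τ * T⁻¹ = τ⁻¹ := by
    rw [hT]
    exact eq_inv_of_mul_eq_one_left (by simpa only [mul_assoc] using hinv)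
  have hpow (k : ℤ) (z : Z) : T ((τ ^ k) z) = (τ ^ (-k)) (T z) := by
    have h : T * τ ^ k = τ ^ (-k) * T := by
      rw [← mul_inv_eq_iff_eq_mul, ← conj_zpow, hconj, inv_zpow, zpow_neg]
    exact DFunLike.congr_fun h z
  refine ⟨fun x y => ?_, ?_⟩
  · rw [← Equiv.Perm.sameCycle_inv (f := τ) (x := T x), ← hconj, Equiv.Perm.sameCycle_conj]
    simp
  · rintro x ⟨k, hk⟩
    obtain ⟨m, rfl | rfl⟩ := Int.even_or_odd' k
    · apply hTfp ((τ ^ m) x)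
      rw [hpow, ← hk, ← Equiv.Perm.mul_apply, ← zpow_add]
      congr 2
      ring
    · apply hfp ((τ ^ m) x)
      have h : (T * τ) ((τ ^ m) x) = T ((τ ^ (m + 1)) x) := by
        rw [add_comm, zpow_one_add]
        rfl
      rw [h, hpow, ← hk, ← Equiv.Perm.mul_apply, ← zpow_add]
      congr 2
      ring
end

section
/- Let Z be a finite set and T a fixed-point-free involution of Z. A permutation τ of Z can be written in the form τ = ϖ⁻¹ ∘ T ∘ ϖ ∘ T for some permutation ϖ of Z if and only if T ∘ τ is a fixed-point-free involution of Z. -/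
/-!
If `τ = ϖ⁻¹ T ϖ T`, then `T τ = (ϖ T)⁻¹ T (ϖ T)` is conjugate to `T`, hence again a fixed-point-free
involution. Conversely, all fixed-point-free involutions of a finite set are conjugate, since their
cycle type consists only of `2`s, with multiplicity half the size of the set
(`isConj_of_fixedPointFree_involutions`). So `T τ = c T c⁻¹` for some `c`, and `ϖ = c⁻¹ T` works.
-/

theorem isConj_of_fixedPointFree_involutions {Z : Type*} [Fintype Z] (S T : Equiv.Perm Z)
    (hS : S * S = 1) (hSfp : ∀ z, S z ≠ z) (hT : T * T = 1) (hTfp : ∀ z, T z ≠ z) :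
    IsConj S T := by
  classical
  have key : ∀ R : Equiv.Perm Z, R * R = 1 → (∀ z, R z ≠ z) →
      R.cycleType = Multiset.replicate (Fintype.card Z / 2) 2 := by
    intro R hR hRfp
    have hrep : R.cycleType = Multiset.replicate R.cycleType.card 2 :=
      Equiv.Perm.cycleType_of_pow_prime_eq_one (by rw [pow_two, hR])
    have hsupp : R.support = Finset.univ := by
      ext z
      simp [hRfp z]
    have hsum := R.sum_cycleType
    rw [hrep, hsupp, Multiset.sum_replicate, smul_eq_mul, Finset.card_univ] at hsum
    rw [← hsum, Nat.mul_div_cancel _ two_pos]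
    exact hrep
  exact Equiv.Perm.isConj_of_cycleType_eq ((key S hS hSfp).trans (key T hT hTfp).symm)

/-- Let `Z` be a finite set and `T` a fixed-point-free involution of `Z`.
A permutation `τ` of `Z` can be written in the form `τ = ϖ⁻¹ ∘ T ∘ ϖ ∘ T` for some
permutation `ϖ` of `Z` iff `T ∘ τ` is a fixed-point-free involution of `Z`. -/
theorem orth_target_perm_characterization {Z : Type*} [Fintype Z]
    (T τ : Equiv.Perm Z) (hTinv : T * T = 1) (hTfp : ∀ z : Z, T z ≠ z) :
    (∃ ϖ : Equiv.Perm Z, τ = ϖ⁻¹ * T * ϖ * T) ↔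
      ((T * τ) * (T * τ) = 1 ∧ ∀ z : Z, (T * τ) z ≠ z) := by
  have hT : T⁻¹ = T := inv_eq_of_mul_eq_one_left hTinv
  constructor
  · rintro ⟨ϖ, rfl⟩
    have h : T * (ϖ⁻¹ * T * ϖ * T) = (ϖ * T)⁻¹ * T * (ϖ * T) := by
      rw [mul_inv_rev, hT]
      group
    rw [h]
    constructor
    · calc (ϖ * T)⁻¹ * T * (ϖ * T) * ((ϖ * T)⁻¹ * T * (ϖ * T))
          = (ϖ * T)⁻¹ * (T * T) * (ϖ * T) := by group
        _ = 1 := by rw [hTinv]; group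
    · intro z hz
      rw [mul_assoc, Equiv.Perm.mul_apply, Equiv.Perm.inv_eq_iff_eq, Equiv.Perm.mul_apply] at hz
      exact hTfp _ hz
  · rintro ⟨hS, hSfp⟩
    obtain ⟨c, hc⟩ := isConj_iff.mp
      (isConj_of_fixedPointFree_involutions T (T * τ) hTinv hTfp hS hSfp)
    refine ⟨c⁻¹ * T, ?_⟩
    calc τ = T⁻¹ * (T * τ) := by group
      _ = T * (c * T * c⁻¹) * (T * T) := by rw [← hc, hT, hTinv, mul_one]
      _ = (c⁻¹ * T)⁻¹ * T * (c⁻¹ * T) * T := by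
        rw [mul_inv_rev, hT]
        group
end

section
/- Let Z_t = {1,…,t} ∪ {1̄,…,t̄} and T the involution exchanging j and j̄ for every j. Suppose a permutation ϖ of Z_t is written as ϖ = T′ ∘ π_o ∘ π_e ∘ T″, where π_o fixes every barred element, π_e fixes every unbarred element, and T′, T″ are involutions with T′(z) ∈ {z, T(z)} and T″(z) ∈ {z, T(z)} for all z. Then the target permutation τ = ϖ⁻¹ ∘ T ∘ ϖ ∘ T is conjugate to π ∘ (T ∘ π⁻¹ ∘ T), where π = T ∘ π_e⁻¹ ∘ T ∘ π_o. In particular, the cycle type of τ is twice the cycle type of π, i.e. cycleType(τ) = cycleType(π) + cycleType(π). -/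
/-!
The involutions `T'` and `T''` preserve the pairs `{j, j̄}`, hence commute with `T`
(`commute_of_preserves_pairs`). Thus `T'` cancels from `τ = ϖ⁻¹ T ϖ T`, and `τ` is the conjugate
by `T''` of `πe⁻¹ πo⁻¹ T πo πe T`. Since `πo` and `T πo T` have disjoint supports (unbarred and
barred elements respectively) they commute, and this turns the last permutation into the conjugate
by `T` of `π (T π⁻¹ T)`. The permutation `π` again fixes all barred elements, so `π` and
`T π⁻¹ T` are disjoint; as the latter has the cycle type of `π`, the cycle types add up.
-/

/-- An involution `S` preserving every orbit `{z, T z}` of a fixed-point-free involution `T`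
commutes with `T`: on each orbit it acts either as the identity or as `T`. -/
theorem commute_of_preserves_pairs {α : Type*} {S T : Equiv.Perm α}
    (hTT : ∀ z, T (T z) = z) (hfix : ∀ z, T z ≠ z) (hSS : S * S = 1)
    (hS : ∀ z, S z = z ∨ S z = T z) : S * T = T * S := by
  ext z
  simp only [Equiv.Perm.mul_apply]
  have hSSz : S (S z) = z := by rw [← Equiv.Perm.mul_apply, hSS, Equiv.Perm.one_apply]
  rcases hS z with h | h
  · rcases hS (T z) with h2 | h2
    · rw [h2, h]
    -- in the remaining case `S` would send both `z` and `T z` to `z`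
    · rw [hTT] at h2
      exact absurd (S.injective (h2.trans h.symm)) (hfix z)
  · rw [← h, hSSz, h, hTT]

/-- If `f` and `g` fix every barred element, then `T g T` fixes every unbarred element and is
therefore disjoint from `f`. -/
theorem disjoint_conj_sumComm {t : ℕ} {T f g : Equiv.Perm (Fin t ⊕ Fin t)}
    (hT : T = Equiv.sumComm (Fin t) (Fin t))
    (hf : ∀ j : Fin t, f (Sum.inr j) = Sum.inr j)
    (hg : ∀ j : Fin t, g (Sum.inr j) = Sum.inr j) :
    Equiv.Perm.Disjoint f (T * g * T) := by
  rintro (j | j)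
  · right
    simp [hT, hg]
  · exact Or.inl (hf j)

/-- On `Z_t = {1,…,t} ∪ {1̄,…,t̄}` (encoded as `Fin t ⊕ Fin t`) with `T`
the involution exchanging `j` and `j̄` (encoded as `Equiv.sumComm`), suppose a permutation
`ϖ` is factorized as `ϖ = T′ ∘ π_o ∘ π_e ∘ T″` where `π_o` fixes every barred element,
`π_e` fixes every unbarred element, and `T′, T″` are involutions with
`T′ z, T″ z ∈ {z, T z}`.  Then the target permutation `τ = ϖ⁻¹ ∘ T ∘ ϖ ∘ T` is conjugate
to `π ∘ (T ∘ π⁻¹ ∘ T)` where `π = T ∘ π_e⁻¹ ∘ T ∘ π_o`; in particular the cycle type of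
`τ` is twice the cycle type of `π`. -/
theorem target_cycle_type_doubling (t : ℕ)
    (T ϖ T' T'' πo πe π : Equiv.Perm (Fin t ⊕ Fin t))
    (hT : T = Equiv.sumComm (Fin t) (Fin t))
    (hπo : ∀ j : Fin t, πo (Sum.inr j) = Sum.inr j)
    (hπe : ∀ j : Fin t, πe (Sum.inl j) = Sum.inl j)
    (hT'inv : T' * T' = 1) (hT''inv : T'' * T'' = 1)
    (hT' : ∀ z, T' z = z ∨ T' z = T z)
    (hT'' : ∀ z, T'' z = z ∨ T'' z = T z)
    (hϖ : ϖ = T' * πo * πe * T'')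
    (hπ : π = T * πe⁻¹ * T * πo) :
    IsConj (π * (T * π⁻¹ * T)) (ϖ⁻¹ * T * ϖ * T) ∧
    (ϖ⁻¹ * T * ϖ * T).cycleType = π.cycleType + π.cycleType := by
  have hTz : ∀ z, T (T z) = z := by
    subst hT
    rintro (j | j) <;> rfl
  have hfix : ∀ z, T z ≠ z := by
    subst hT
    rintro (j | j) <;> simp
  have hTT : T * T = 1 := Equiv.ext hTz
  have hTi : T⁻¹ = T := inv_eq_of_mul_eq_one_left hTT
  have hT'i : T'⁻¹ = T' := inv_eq_of_mul_eq_one_left hT'inv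
  have hT''i : T''⁻¹ = T'' := inv_eq_of_mul_eq_one_left hT''inv
  have hc' : T' * T = T * T' := commute_of_preserves_pairs hTz hfix hT'inv hT'
  have hc'' : T'' * T = T * T'' := commute_of_preserves_pairs hTz hfix hT''inv hT''
  have hπoi : ∀ j : Fin t, πo⁻¹ (Sum.inr j) = Sum.inr j := fun j =>
    Equiv.Perm.inv_eq_iff_eq.mpr (hπo j).symm
  have hπei : ∀ j : Fin t, πe⁻¹ (Sum.inl j) = Sum.inl j := fun j =>
    Equiv.Perm.inv_eq_iff_eq.mpr (hπe j).symm
  have hπr : ∀ j : Fin t, π (Sum.inr j) = Sum.inr j := by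
    intro j
    simp only [hπ, hT, Equiv.Perm.mul_apply, hπo, Equiv.sumComm_apply, Sum.swap_inr, hπei,
      Sum.swap_inl]
  have hπri : ∀ j : Fin t, π⁻¹ (Sum.inr j) = Sum.inr j := fun j =>
    Equiv.Perm.inv_eq_iff_eq.mpr (hπr j).symm
  have hcomm : πo⁻¹ * (T * πo * T) = (T * πo * T) * πo⁻¹ :=
    (disjoint_conj_sumComm hT hπoi hπo).commute
  have hconj : (T'' * T) * (π * (T * π⁻¹ * T)) * (T'' * T)⁻¹ = ϖ⁻¹ * T * ϖ * T := by
    calc (T'' * T) * (π * (T * π⁻¹ * T)) * (T'' * T)⁻¹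
        = T'' * (T * T) * πe⁻¹ * ((T * πo * T) * πo⁻¹) * T * πe * (T * T) * T * T'' := by
          rw [hπ]
          simp only [mul_inv_rev, inv_inv, hTi, hT''i, mul_assoc]
      _ = T'' * πe⁻¹ * πo⁻¹ * T * πo * (T * T) * πe * (T * T'') := by
          rw [← hcomm, hTT]
          simp only [mul_assoc, one_mul]
          rw [← mul_assoc T T, hTT, one_mul]
      _ = T'' * πe⁻¹ * πo⁻¹ * (T' * T') * T * πo * πe * T'' * T := by
          rw [hTT, hT'inv, ← hc'']
          simp only [mul_assoc, one_mul]
      _ = T'' * πe⁻¹ * πo⁻¹ * T' * (T' * T) * πo * πe * T'' * T := by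
          simp only [mul_assoc]
      _ = ϖ⁻¹ * T * ϖ * T := by
          rw [hc', hϖ]
          simp only [mul_inv_rev, hT'i, hT''i, mul_assoc]
  refine ⟨isConj_iff.mpr ⟨_, hconj⟩, ?_⟩
  have hbar : (T * π⁻¹ * T).cycleType = π.cycleType := by
    have h := Equiv.Perm.cycleType_conj (σ := π⁻¹) (τ := T)
    rwa [hTi, Equiv.Perm.cycleType_inv] at h
  rw [← hconj, Equiv.Perm.cycleType_conj,
    (disjoint_conj_sumComm hT hπr hπri).cycleType_mul, hbar]
end

section
/- Let Z be a finite set, T a fixed-point-free involution of Z, and τ a permutation of Z such that T ∘ τ is a fixed-point-free involution. Let x ≠ y be elements of Z such that x and T(y) lie in the same cycle of τ. Then the permutation swap(x, y) ∘ τ ∘ swap(T(x), T(y)) is conjugate to τ; in particular it has the same cycle type as τ. -/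
/-!
Both `T` and `T * τ` are involutions, so `T` conjugates `τ` to `τ⁻¹` and maps every cycle of `τ`
to a cycle traversed backwards. This mirror cycle is never the original one: if `T z = τ ^ n z`,
then the midpoint of the path from `z` to `T z` yields a fixed point of `T` (`n` even) or of
`T * τ` (`n` odd). This is `not_sameCycle_mirror`.

Write `T y = τ ^ k x`; reversal gives `T x = τ ^ k y`. Hence `x` and `y` lie in different cycles of
`τ`, of the same length, and the transpositions `s i = swap (τ ^ i x) (τ ^ i y)` commute pairwise
and satisfy `τ * s i = s (i + 1) * τ`. The permutation in question is `s 0 * τ * s k`, and it is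
the conjugate of `τ` by `s 0 * s 1 * ⋯ * s k`, because conjugating `τ` by this product telescopes
(`exists_conj_of_commute`).
-/

open Equiv Equiv.Perm

/-- `T` reverses the direction of `τ`. -/
lemma mirror_zpow {Z : Type*} {T τ : Perm Z} (hTinv : T * T = 1)
    (hinv : (T * τ) * (T * τ) = 1) (n : ℤ) (z : Z) :
    T ((τ ^ n) z) = (τ ^ (-n)) (T z) := by
  have hT : T⁻¹ = T := inv_eq_of_mul_eq_one_left hTinv
  have h1 : T * τ * T⁻¹ = τ⁻¹ := by
    rw [hT]
    apply eq_inv_of_mul_eq_one_left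
    simpa [mul_assoc] using hinv
  have h2 : T * τ ^ n * T⁻¹ = τ ^ (-n) := by
    rw [← conj_zpow, h1, inv_zpow, zpow_neg]
  rw [← h2]
  simp

lemma not_sameCycle_mirror {Z : Type*} {T τ : Perm Z} (hTinv : T * T = 1)
    (hTfp : ∀ z : Z, T z ≠ z) (hinv : (T * τ) * (T * τ) = 1) (hfp : ∀ z : Z, (T * τ) z ≠ z)
    (z : Z) : ¬ τ.SameCycle z (T z) := by
  rintro ⟨n, hn⟩
  rcases Int.even_or_odd' n with ⟨j, rfl | rfl⟩
  · apply hTfp ((τ ^ j) z)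
    rw [mirror_zpow hTinv hinv, ← hn, ← Perm.mul_apply, ← zpow_add]
    congr 2
    ring
  · -- `T * τ` fixes the point `τ ^ j z`, since `T (τ ^ (j + 1) z) = τ ^ (-(j + 1)) (T z)`.
    apply hfp ((τ ^ j) z)
    have h : (T * τ) ((τ ^ j) z) = T ((τ ^ (j + 1)) z) := by
      rw [add_comm j 1, zpow_one_add]
      rfl
    rw [h, mirror_zpow hTinv hinv, ← hn, ← Perm.mul_apply, ← zpow_add]
    congr 2
    ring

/-- In a group, if the involutions `s i` commute pairwise and `τ` shifts them by conjugation, then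
`s 0 * τ * s k` is conjugate to `τ`. The conjugator, `s 0 * ⋯ * s k`, is recorded only through
its commuting with all the `s j`, which is what the induction needs. -/
lemma exists_conj_of_commute {G : Type*} [Group G] (τ : G) (s : ℕ → G)
    (hsq : ∀ i, s i * s i = 1) (hcomm : ∀ i j, Commute (s i) (s j))
    (hshift : ∀ i, τ * s i = s (i + 1) * τ) (k : ℕ) :
    ∃ p : G, (∀ j, Commute p (s j)) ∧ p * τ * p⁻¹ = s 0 * τ * s k := by
  induction k with
  | zero => exact ⟨s 0, hcomm 0, by rw [inv_eq_of_mul_eq_one_left (hsq 0)]⟩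
  | succ k ih =>
    obtain ⟨p, hp, hpτ⟩ := ih
    refine ⟨p * s (k + 1), fun j => (hp j).mul_left (hcomm _ j), ?_⟩
    have hinv : (s (k + 1))⁻¹ = s (k + 1) := inv_eq_of_mul_eq_one_left (hsq _)
    calc p * s (k + 1) * τ * (p * s (k + 1))⁻¹
        = p * (s (k + 1) * τ) * s (k + 1) * p⁻¹ := by rw [mul_inv_rev, hinv]; group
      _ = p * τ * (s k * s (k + 1) * p⁻¹) := by rw [← hshift]; group
      _ = p * τ * (p⁻¹ * (s k * s (k + 1))) := by
          rw [(((hp k).mul_right (hp (k + 1))).inv_left).eq]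
      _ = s 0 * τ * (s k * s k) * s (k + 1) := by
          rw [← mul_assoc (p * τ), hpτ]; group
      _ = s 0 * τ * s (k + 1) := by rw [hsq, mul_one]

/-- If `T x = τ ^ k y`, every coincidence on the `τ`-orbit of `x` also occurs on that of `y`. -/
lemma mirror_orbit_eq {Z : Type*} {T τ : Perm Z} (hTinv : T * T = 1)
    (hinv : (T * τ) * (T * τ) = 1) {x y : Z} {k : ℕ} (hx : T x = (τ ^ k) y) {i j : ℕ}
    (h : (τ ^ i) x = (τ ^ j) x) : (τ ^ i) y = (τ ^ j) y := by
  have h1 := congrArg T h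
  rw [← zpow_natCast, ← zpow_natCast, mirror_zpow hTinv hinv, mirror_zpow hTinv hinv, hx,
    ← zpow_natCast, ← Perm.mul_apply, ← Perm.mul_apply, ← zpow_add, ← zpow_add] at h1
  have h2 := congrArg (τ ^ ((i : ℤ) + j - k)) h1
  rw [← Perm.mul_apply, ← Perm.mul_apply, ← zpow_add, ← zpow_add] at h2
  rw [← zpow_natCast, ← zpow_natCast]
  convert h2.symm using 3 <;> ring

/-- Let `Z` be a finite set, `T` a fixed-point-free involution of `Z`, and
`τ` a permutation of `Z` such that `T ∘ τ` is a fixed-point-free involution.  Let `x ≠ y`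
be such that `x` and `T y` lie in the same cycle of `τ`.  Then
`swap x y ∘ τ ∘ swap (T x) (T y)` is conjugate to `τ`; in particular it has the same
cycle type as `τ`. -/
theorem tying_mirror_cycle_preserves_cycle_type {Z : Type*} [Fintype Z] [DecidableEq Z]
    (T τ : Equiv.Perm Z) (hTinv : T * T = 1) (hTfp : ∀ z : Z, T z ≠ z)
    (hinv : (T * τ) * (T * τ) = 1) (hfp : ∀ z : Z, (T * τ) z ≠ z)
    (x y : Z) (hxy : x ≠ y) (hcyc : τ.SameCycle x (T y)) :
    IsConj τ (Equiv.swap x y * τ * Equiv.swap (T x) (T y)) ∧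
    (Equiv.swap x y * τ * Equiv.swap (T x) (T y)).cycleType = τ.cycleType := by
  suffices h : IsConj τ (Equiv.swap x y * τ * Equiv.swap (T x) (T y)) from
    ⟨h, (isConj_iff_cycleType_eq.mp h).symm⟩
  have hTT : ∀ z, T (T z) = z := fun z => by rw [← Perm.mul_apply, hTinv, Perm.one_apply]
  obtain ⟨k, -, -, hk⟩ := hcyc.exists_pow_eq''
  have hkx : T x = (τ ^ k) y := by
    have h := congrArg T hk
    rw [← zpow_natCast, mirror_zpow hTinv hinv, hTT, zpow_neg, Perm.inv_eq_iff_eq,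
      zpow_natCast] at h
    exact h
  have hne : ∀ i j : ℕ, (τ ^ i) x ≠ (τ ^ j) y := by
    intro i j h
    have hxy' : τ.SameCycle x y := by
      rw [← sameCycle_pow_left (n := i), h, sameCycle_pow_left]
    exact not_sameCycle_mirror hTinv hTfp hinv hfp y (hxy'.symm.trans hcyc)
  have hiff : ∀ i j : ℕ, (τ ^ i) x = (τ ^ j) x ↔ (τ ^ i) y = (τ ^ j) y := fun i j =>
    ⟨mirror_orbit_eq hTinv hinv hkx, mirror_orbit_eq hTinv hinv hk.symm⟩
  have hcomm : ∀ i j : ℕ, Commute (Equiv.swap ((τ ^ i) x) ((τ ^ i) y))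
      (Equiv.swap ((τ ^ j) x) ((τ ^ j) y)) := by
    intro i j
    by_cases h : (τ ^ i) x = (τ ^ j) x
    · rw [h, (hiff i j).mp h]
    · have h' := fun e => h ((hiff i j).mpr e)
      apply Perm.Disjoint.commute
      intro z
      by_cases hz : z = (τ ^ i) x ∨ z = (τ ^ i) y
      · right
        rcases hz with rfl | rfl
        · exact Equiv.swap_apply_of_ne_of_ne h (hne i j)
        · exact Equiv.swap_apply_of_ne_of_ne (hne j i).symm h'
      · left
        push Not at hz
        exact Equiv.swap_apply_of_ne_of_ne hz.1 hz.2
  obtain ⟨p, -, hp⟩ := exists_conj_of_commute τ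
    (fun i : ℕ => Equiv.swap ((τ ^ i) x) ((τ ^ i) y)) (fun i => Equiv.swap_mul_self _ _) hcomm
    (fun i => by
      simp only [pow_succ', Perm.mul_apply]
      exact Equiv.mul_swap_eq_swap_mul τ _ _) k
  refine isConj_iff.mpr ⟨p, ?_⟩
  rw [hp, hkx, ← hk, Equiv.swap_comm ((τ ^ k) y)]
  simp
end

section
/- Let Z be a finite set, T a fixed-point-free involution of Z, and τ a permutation of Z such that T ∘ τ is a fixed-point-free involution. Then every length in the cycle type of τ occurs with even multiplicity, i.e. there is a multiset m of natural numbers with cycleType(τ) = m + m; moreover the total number of orbits of τ on Z (counting fixed points) is even. -/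
/-!
Conjugation by `T` inverts `τ`, so `T` sends each cycle of `τ` to a cycle of `τ` of the same length,
traversed backwards, and this is an involution on the set of cycles. The key point is that no
cycle is sent to itself (`not_sameCycle_target`): if `T x = τ ^ k x`, then `T` acts on the cycle of
`x` as a reflection, and according to the parity of `k` either `T` or `T * τ` fixes the point
`τ ^ ⌊k / 2⌋ x`. Hence the cycles, and those of any given length, are matched in pairs.
-/

/-- The setoid on `Z` whose classes are the cycles (orbits) of the permutation `τ`,
fixed points forming singleton classes. -/
def cycleSetoid {Z : Type*} (τ : Equiv.Perm Z) : Setoid Z :=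
  ⟨τ.SameCycle,
    ⟨fun x => Equiv.Perm.SameCycle.refl τ x, fun h => h.symm, fun h h' => h.trans h'⟩⟩

/-- The number of orbits of the permutation `τ` (fixed points counted as singleton
orbits). -/
noncomputable def orbitCount {Z : Type*} (τ : Equiv.Perm Z) : ℕ :=
  Nat.card (Quotient (cycleSetoid τ))

/-- A finite type with a fixed-point-free involution has an even number of elements. -/
lemma even_card_of_involutive {α : Type*} [Fintype α] (f : α → α)
    (hf : Function.Involutive f) (hne : ∀ a, f a ≠ a) : Even (Fintype.card α) := by
  classical
  have h := Equiv.Perm.two_dvd_card_support (σ := hf.toPerm f)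
    (by ext a; simp [pow_two, hf a])
  have hs : (hf.toPerm f).support = Finset.univ := by
    ext a; simp [hne a]
  rw [hs, Finset.card_univ] at h
  exact even_iff_two_dvd.2 h

section

variable {Z : Type*} {T τ : Equiv.Perm Z}

lemma target_zpow_apply (hTinv : T * T = 1) (hinv : (T * τ) * (T * τ) = 1) (k : ℤ) (z : Z) :
    T ((τ ^ k) z) = (τ ^ (-k)) (T z) := by
  have hT : T⁻¹ = T := inv_eq_of_mul_eq_one_left hTinv
  have hc : T * τ * T⁻¹ = τ⁻¹ := by
    rw [hT]
    exact eq_inv_of_mul_eq_one_left (by simpa [mul_assoc] using hinv)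
  have h : T * τ ^ k = τ ^ (-k) * T := by
    rw [zpow_neg, ← inv_zpow, ← hc, conj_zpow, inv_mul_cancel_right]
  exact congrArg (fun p : Equiv.Perm Z => p z) h

lemma not_sameCycle_target (hTinv : T * T = 1) (hTfp : ∀ z : Z, T z ≠ z)
    (hinv : (T * τ) * (T * τ) = 1) (hfp : ∀ z : Z, (T * τ) z ≠ z) (z : Z) :
    ¬ τ.SameCycle (T z) z := by
  intro h
  obtain ⟨k, hk⟩ := h.symm
  obtain ⟨j, hj | hj⟩ := Int.even_or_odd' k
  · apply hTfp ((τ ^ j) z)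
    rw [target_zpow_apply hTinv hinv, ← hk, ← Equiv.Perm.mul_apply, ← zpow_add]
    congr 2; omega
  · apply hfp ((τ ^ j) z)
    have h1 : τ ((τ ^ j) z) = (τ ^ (1 + j)) z := by rw [zpow_one_add]; rfl
    rw [Equiv.Perm.mul_apply, h1, target_zpow_apply hTinv hinv, ← hk, ← Equiv.Perm.mul_apply,
      ← zpow_add]
    congr 2; omega

lemma sameCycle_target (hTinv : T * T = 1) (hinv : (T * τ) * (T * τ) = 1) {x y : Z}
    (h : τ.SameCycle x y) : τ.SameCycle (T x) (T y) := by
  obtain ⟨k, rfl⟩ := h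
  exact ⟨-k, (target_zpow_apply hTinv hinv k x).symm⟩

lemma even_orbitCount_of_target [Fintype Z] (hTinv : T * T = 1) (hTfp : ∀ z : Z, T z ≠ z)
    (hinv : (T * τ) * (T * τ) = 1) (hfp : ∀ z : Z, (T * τ) z ≠ z) : Even (orbitCount τ) := by
  classical
  unfold orbitCount
  rw [Nat.card_eq_fintype_card]
  have hTT (z : Z) : T (T z) = z := congrArg (fun p : Equiv.Perm Z => p z) hTinv
  refine even_card_of_involutive
    (Quotient.map T fun _ _ h => sameCycle_target hTinv hinv h) ?_ ?_
  · intro q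
    induction q using Quotient.inductionOn with
    | h z => exact congrArg (Quotient.mk _) (hTT z)
  · intro q
    induction q using Quotient.inductionOn with
    | h z => exact fun h => not_sameCycle_target hTinv hTfp hinv hfp z (Quotient.exact h)

/-- The reflected factor `T * c⁻¹ * T⁻¹` is again a cycle factor of `τ`, since conjugation by `T`
inverts `τ`. -/
lemma reflect_mem_cycleFactorsFinset [Fintype Z] [DecidableEq Z] (hTinv : T * T = 1)
    (hinv : (T * τ) * (T * τ) = 1) {c : Equiv.Perm Z} (hc : c ∈ τ.cycleFactorsFinset) :
    T * c⁻¹ * T⁻¹ ∈ τ.cycleFactorsFinset := by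
  have hT : T⁻¹ = T := inv_eq_of_mul_eq_one_left hTinv
  have hτ : τ = T * τ⁻¹ * T⁻¹ := by
    rw [hT]
    have h : T * τ * T = τ⁻¹ := eq_inv_of_mul_eq_one_left (by simpa [mul_assoc] using hinv)
    rw [← h]
    simp [mul_assoc, hTinv]
    simp [← mul_assoc, hTinv]
  rw [hτ, Equiv.Perm.mem_cycleFactorsFinset_conj]
  rw [Equiv.Perm.mem_cycleFactorsFinset_iff] at hc ⊢
  refine ⟨hc.1.inv, fun a ha => ?_⟩
  rw [Equiv.Perm.support_inv] at ha
  -- `c` and `τ` agree at `c⁻¹ a`, which also lies in the support of `c`.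
  have h := hc.2 (c⁻¹ a) (by
    rw [Equiv.Perm.mem_support] at ha ⊢
    simpa [Equiv.eq_symm_apply, eq_comm] using ha)
  rw [Equiv.Perm.eq_inv_iff_eq, ← h]
  exact c.apply_symm_apply a

lemma even_count_cycleType_of_target [Fintype Z] [DecidableEq Z] (hTinv : T * T = 1)
    (hTfp : ∀ z : Z, T z ≠ z) (hinv : (T * τ) * (T * τ) = 1) (hfp : ∀ z : Z, (T * τ) z ≠ z)
    (n : ℕ) : Even (τ.cycleType.count n) := by
  have hT : T⁻¹ = T := inv_eq_of_mul_eq_one_left hTinv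
  rw [Equiv.Perm.CycleType.count_def]
  refine even_card_of_involutive
    (fun c => ⟨⟨T * c.1.1⁻¹ * T⁻¹, reflect_mem_cycleFactorsFinset hTinv hinv c.1.2⟩, ?_⟩) ?_ ?_
  · simpa [Equiv.Perm.card_support_conj] using c.2
  · rintro ⟨⟨c, hc⟩, hn⟩
    apply Subtype.ext
    apply Subtype.ext
    simp only [mul_inv_rev, inv_inv, mul_assoc]
    rw [hT, hTinv, ← mul_assoc, hTinv, one_mul, mul_one]
  · rintro ⟨⟨c, hc⟩, hn⟩ h
    have h : T * c⁻¹ * T⁻¹ = c := congrArg (fun d => d.1.1) h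
    obtain ⟨x, hx, -⟩ := (Equiv.Perm.mem_cycleFactorsFinset_iff.1 hc).1
    have hTx : T x ∈ c.support := by
      rw [← h]
      simpa [Equiv.Perm.inv_eq_iff_eq, eq_comm] using hx
    exact not_sameCycle_target hTinv hTfp hinv hfp x
      ((Equiv.Perm.isCycleOn_support_of_mem_cycleFactorsFinset hc).2 hTx
        (Equiv.Perm.mem_support.2 hx))

end

/-- Let `Z` be a finite set, `T` a fixed-point-free involution of `Z`,
and `τ` a permutation of `Z` such that `T ∘ τ` is a fixed-point-free involution.  Then
every length in the cycle type of `τ` occurs with even multiplicity, i.e.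
`cycleType τ = m + m` for some multiset `m`; moreover the total number of orbits of `τ`
on `Z` (counting fixed points) is even. -/
theorem paired_cycle_type_of_target {Z : Type*} [Fintype Z] [DecidableEq Z]
    (T τ : Equiv.Perm Z) (hTinv : T * T = 1) (hTfp : ∀ z : Z, T z ≠ z)
    (hinv : (T * τ) * (T * τ) = 1) (hfp : ∀ z : Z, (T * τ) z ≠ z) :
    (∃ m : Multiset ℕ, τ.cycleType = m + m) ∧ Even (orbitCount τ) := by
  refine ⟨?_, even_orbitCount_of_target hTinv hTfp hinv hfp⟩
  obtain ⟨m, hm⟩ := Multiset.exists_smul_of_dvd_count τ.cycleType (k := 2) fun n _ =>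
    even_iff_two_dvd.1 (even_count_cycleType_of_target hTinv hTfp hinv hfp n)
  exact ⟨m, by rw [hm, two_nsmul]⟩
end
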